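/- For every a ≥ 1 and every b ≥ 0 there exists a constant C ≥ 1 such that for all t ∈ ℝ and all Schwartz functions f : ℝ → ℂ: ‖ ⟨·⟩^{-a} ⟨∇⟩^{-b} e^{±it⟨∇⟩} ( ⟨·⟩^{-a} f ) ‖_{L²(ℝ)} ≤ C ⟨t⟩^{-1/2} ‖f‖_{L²(ℝ)}. -/

import Mathlib

open MeasureTheory

/-- Fourier transform with the convention `ĥ(ξ) = (2π)^{-1/2} ∫ e^{-ixξ} h(x) dx`. -/
noncomputable def FT (h : ℝ → ℂ) (ξ : ℝ) : ℂ :=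
  (Real.sqrt (2 * Real.pi) : ℂ)⁻¹ * ∫ x : ℝ, Complex.exp (-(Complex.I * x * ξ)) * h x

/-- Inverse Fourier transform `(2π)^{-1/2} ∫ e^{+ixξ} h(ξ) dξ`. -/
noncomputable def IFT (h : ℝ → ℂ) (x : ℝ) : ℂ :=
  (Real.sqrt (2 * Real.pi) : ℂ)⁻¹ * ∫ ξ : ℝ, Complex.exp (Complex.I * x * ξ) * h ξ

/-- Japanese bracket `⟨x⟩ = (1+x²)^{1/2}`. -/
noncomputable def jap (x : ℝ) : ℝ := Real.sqrt (1 + x ^ 2)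

/-- Fourier multiplier operator with symbol `m`: `m(D)h = ℱ^{-1}(m(ξ) ĥ(ξ))`. -/
noncomputable def Mop (m : ℝ → ℂ) (h : ℝ → ℂ) : ℝ → ℂ :=
  IFT (fun ξ => m ξ * FT h ξ)

/-- The `L²(ℝ)` norm. -/
noncomputable def L2C (h : ℝ → ℂ) : ℝ := Real.sqrt (∫ x : ℝ, ‖h x‖ ^ 2)

open scoped ContDiff FourierTransform LineDeriv SchwartzMap

/-!
If `Φ' = m`, then `m(D) = -i [x, Φ(D)]`, so that `⟨x⟩⁻¹ m(D) ⟨x⟩⁻¹` is bounded on `L²` by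
`2 sup |Φ|`: each of the two terms of the commutator has its factor `x` absorbed by a weight, and
`Φ(D)` is bounded by Plancherel. For `m(ξ) = ⟨ξ⟩^{-b} e^{iτ⟨ξ⟩}` and `|τ| ≥ 1`, van der Corput's
first-derivative test away from the stationary point `ξ = 0` shows that the primitive of `m` is
`O(|τ|^{-1/2})`. For `|τ| ≤ 1` the bound `|m| ≤ 1` suffices.
-/

/-! ### The Japanese bracket -/

lemma one_le_jap (x : ℝ) : 1 ≤ jap x :=
  Real.one_le_sqrt.2 (by linarith [sq_nonneg x])

lemma jap_pos (x : ℝ) : 0 < jap x := one_pos.trans_le (one_le_jap x)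

lemma abs_le_jap (x : ℝ) : |x| ≤ jap x := Real.abs_le_sqrt (by linarith)

lemma jap_neg (x : ℝ) : jap (-x) = jap x := by simp [jap]

lemma jap_mul_of_eq_one_or_neg_one {σ : ℝ} (hσ : σ = 1 ∨ σ = -1) (x : ℝ) :
    jap (σ * x) = jap x := by
  rcases hσ with rfl | rfl <;> simp [jap_neg]

lemma jap_le_one_add_abs (x : ℝ) : jap x ≤ 1 + |x| :=
  Real.sqrt_le_iff.2 ⟨by positivity, by nlinarith [sq_abs x, abs_nonneg x]⟩

lemma jap_rpow (x c : ℝ) : jap x ^ c = (1 + x ^ 2) ^ (c / 2) := by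
  rw [jap, Real.sqrt_eq_rpow, ← Real.rpow_mul (by positivity), one_div_mul_eq_div]

lemma jap_rpow_neg_le_inv {a : ℝ} (ha : 1 ≤ a) (x : ℝ) : jap x ^ (-a) ≤ (jap x)⁻¹ := by
  rw [← Real.rpow_neg_one]
  exact Real.rpow_le_rpow_of_exponent_le (one_le_jap x) (neg_le_neg ha)

lemma jap_mul_jap_rpow_neg_le_one {a : ℝ} (ha : 1 ≤ a) (x : ℝ) : jap x * jap x ^ (-a) ≤ 1 := by
  calc jap x * jap x ^ (-a) ≤ jap x * (jap x)⁻¹ :=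
        mul_le_mul_of_nonneg_left (jap_rpow_neg_le_inv ha x) (jap_pos x).le
    _ = 1 := mul_inv_cancel₀ (jap_pos x).ne'

lemma norm_ofReal_jap_rpow (x c : ℝ) : ‖((jap x ^ c : ℝ) : ℂ)‖ = jap x ^ c :=
  Complex.norm_of_nonneg (Real.rpow_nonneg (jap_pos x).le c)

lemma inv_sqrt_le_two_mul_jap_rpow {r t : ℝ} (hr : 1 ≤ r) (htr : |t| ≤ r) :
    (√r)⁻¹ ≤ 2 * jap t ^ (-(1 : ℝ) / 2) := by
  have hjap : √(jap t) ≤ 2 * √r := by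
    rw [← Real.sqrt_sq zero_le_two, ← Real.sqrt_mul (sq_nonneg _)]
    exact Real.sqrt_le_sqrt (by linarith [jap_le_one_add_abs t])
  have hr_pos : 0 < √r := Real.sqrt_pos.2 (by linarith)
  have hjap_pos : 0 < √(jap t) := Real.sqrt_pos.2 (jap_pos t)
  rw [neg_div, Real.rpow_neg (jap_pos t).le, ← Real.sqrt_eq_rpow, ← div_eq_mul_inv,
    inv_eq_one_div, div_le_div_iff₀ hr_pos hjap_pos]
  linarith

lemma hasDerivAt_jap (x : ℝ) : HasDerivAt jap (x / jap x) x := by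
  have h : HasDerivAt (fun y : ℝ => 1 + y ^ 2) (2 * x) x := by
    simpa using (hasDerivAt_pow 2 x).const_add 1
  convert! h.sqrt (by positivity) using 1
  rw [jap, mul_div_mul_left _ _ two_ne_zero]

@[fun_prop]
lemma hasTemperateGrowth_jap_rpow (c : ℝ) : (fun x : ℝ => jap x ^ c).HasTemperateGrowth := by
  simpa [jap_rpow] using Function.hasTemperateGrowth_one_add_norm_sq_rpow ℝ (c / 2)

@[fun_prop]
lemma hasTemperateGrowth_jap : jap.HasTemperateGrowth := by
  simpa using hasTemperateGrowth_jap_rpow 1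

@[fun_prop]
lemma hasTemperateGrowth_ofReal_jap_rpow (c : ℝ) :
    (fun x : ℝ => ((jap x ^ c : ℝ) : ℂ)).HasTemperateGrowth :=
  Function.Complex.hasTemperateGrowth_ofReal.comp (hasTemperateGrowth_jap_rpow c)

/-! ### Temperate growth of phases and primitives -/

lemma iteratedDeriv_cexp_I_mul (n : ℕ) :
    iteratedDeriv n (fun s : ℝ => Complex.exp (Complex.I * s)) =
      fun s : ℝ => Complex.I ^ n * Complex.exp (Complex.I * s) := by
  induction n with
  | zero => simp
  | succ n ih =>
    rw [iteratedDeriv_succ, ih]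
    funext s
    have h : HasDerivAt (fun s : ℝ => Complex.I * (s : ℂ)) (Complex.I * 1) s :=
      Complex.ofRealCLM.hasDerivAt.const_mul _
    rw [(h.cexp.const_mul _).deriv]
    ring

lemma hasTemperateGrowth_cexp_I_mul :
    (fun s : ℝ => Complex.exp (Complex.I * s)).HasTemperateGrowth := by
  have h : ContDiff ℝ ∞ (fun s : ℝ => (s : ℂ)) := Complex.ofRealCLM.contDiff
  refine ⟨by fun_prop, fun n => ⟨0, 1, fun s => ?_⟩⟩
  rw [norm_iteratedFDeriv_eq_norm_iteratedDeriv, iteratedDeriv_cexp_I_mul]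
  simp [Complex.norm_exp]

lemma hasTemperateGrowth_of_hasDerivAt_of_norm_le {E : Type*} [NormedAddCommGroup E]
    [NormedSpace ℝ E] {Φ m : ℝ → E} {A : ℝ} (hm : m.HasTemperateGrowth)
    (hΦ : ∀ ξ, HasDerivAt Φ (m ξ) ξ) (hA : ∀ ξ, ‖Φ ξ‖ ≤ A) : Φ.HasTemperateGrowth := by
  have hfderiv : fderiv ℝ Φ = ContinuousLinearMap.toSpanSingletonCLE ∘ m :=
    funext fun ξ => (hΦ ξ).hasFDerivAt.fderiv
  refine .of_fderiv (k := 0) (C := A) ?_ (fun ξ => (hΦ ξ).differentiableAt) (by simpa using hA)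
  rw [hfderiv]
  exact (ContinuousLinearEquiv.hasTemperateGrowth _).comp hm

/-! ### The `L²` norm -/

lemma L2C_nonneg (h : ℝ → ℂ) : 0 ≤ L2C h := Real.sqrt_nonneg _

lemma L2C_eq_lpNorm {h : ℝ → ℂ} (hh : AEStronglyMeasurable h) : L2C h = lpNorm h 2 volume := by
  simp [L2C, lpNorm_eq_integral_norm_rpow_toReal two_ne_zero ENNReal.ofNat_ne_top hh,
    Real.sqrt_eq_rpow]

lemma L2C_le_lpNorm {h : ℝ → ℂ} {g : ℝ → ℝ} (hg : MemLp g 2) (hhg : ∀ x, ‖h x‖ ≤ g x) :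
    L2C h ≤ lpNorm g 2 volume := by
  have hg_sq : Integrable fun x => ‖g x‖ ^ 2 := (memLp_two_iff_integrable_sq_norm hg.1).1 hg
  calc L2C h ≤ √(∫ x, ‖g x‖ ^ 2) := by
        refine Real.sqrt_le_sqrt (integral_mono_of_nonneg (.of_forall fun x => by positivity) hg_sq
          (.of_forall fun x => ?_))
        exact pow_le_pow_left₀ (norm_nonneg _) ((hhg x).trans (Real.le_norm_self _)) 2
    _ = lpNorm g 2 volume := by
        simp [lpNorm_eq_integral_norm_rpow_toReal two_ne_zero ENNReal.ofNat_ne_top hg.1,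
          Real.sqrt_eq_rpow]

lemma L2C_le_mul_of_norm_le {h f : ℝ → ℂ} {c : ℝ} (hc : 0 ≤ c) (hf : MemLp f 2)
    (hhf : ∀ x, ‖h x‖ ≤ c * ‖f x‖) : L2C h ≤ c * L2C f := by
  refine (L2C_le_lpNorm (hf.norm.const_mul c) hhf).trans_eq ?_
  rw [L2C_eq_lpNorm hf.1, ← lpNorm_norm hf.1]
  exact (lpNorm_const_smul c (fun x => ‖f x‖) volume).trans
    (by rw [coe_nnnorm, Real.norm_of_nonneg hc])

lemma L2C_le_add_of_norm_le {h f g : ℝ → ℂ} (hf : MemLp f 2) (hg : MemLp g 2)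
    (hhfg : ∀ x, ‖h x‖ ≤ ‖f x‖ + ‖g x‖) : L2C h ≤ L2C f + L2C g := by
  refine (L2C_le_lpNorm (hf.norm.add hg.norm) hhfg).trans ?_
  rw [L2C_eq_lpNorm hf.1, L2C_eq_lpNorm hg.1, ← lpNorm_norm hf.1, ← lpNorm_norm hg.1]
  exact lpNorm_add_le hf.norm one_le_two

lemma L2C_fourier (f : 𝓢(ℝ, ℂ)) : L2C (𝓕 f : 𝓢(ℝ, ℂ)) = L2C f := by
  rw [L2C, SchwartzMap.integral_norm_sq_fourier, L2C]

/-! ### Fourier multipliers -/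

lemma FT_two_pi_mul (h : ℝ → ℂ) (η : ℝ) :
    FT h (2 * Real.pi * η) = (√(2 * Real.pi) : ℂ)⁻¹ * 𝓕 h η := by
  rw [FT, Real.fourier_real_eq_integral_exp_smul]
  congr 2 with x
  rw [smul_eq_mul]
  congr 2
  push_cast
  ring

lemma IFT_eq_fourierInv (g : ℝ → ℂ) (x : ℝ) :
    IFT g x = √(2 * Real.pi) * 𝓕⁻ (fun η => g (2 * Real.pi * η)) x := by
  have hpi : 0 < 2 * Real.pi := by positivity
  have hscale := Measure.integral_comp_mul_left
    (fun ξ : ℝ => Complex.exp (Complex.I * x * ξ) * g ξ) (2 * Real.pi)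
  have hsqrt : (√(2 * Real.pi) : ℂ)⁻¹ = √(2 * Real.pi) * ((2 * Real.pi)⁻¹ : ℝ) := by
    norm_cast
    rw [← div_eq_mul_inv, Real.sqrt_div_self', one_div]
  rw [IFT, Real.fourierInv_eq', hsqrt, mul_assoc, ← Complex.real_smul (x := (2 * Real.pi)⁻¹),
    ← abs_of_pos (inv_pos.2 hpi), ← hscale]
  congr 2 with η
  rw [smul_eq_mul]
  congr 2
  simp only [Complex.ofReal_mul, Complex.ofReal_ofNat, RCLike.inner_apply, Real.ringHom_apply]
  ring

lemma hasTemperateGrowth_comp_two_pi_mul {m : ℝ → ℂ} (hm : m.HasTemperateGrowth) :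
    (fun η : ℝ => m (2 * Real.pi * η)).HasTemperateGrowth :=
  hm.comp (by fun_prop : (fun η : ℝ => 2 * Real.pi * η).HasTemperateGrowth)

lemma Mop_eq_fourierMultiplierCLM {m : ℝ → ℂ} (hm : m.HasTemperateGrowth) (h : 𝓢(ℝ, ℂ)) :
    Mop m h = SchwartzMap.fourierMultiplierCLM ℂ (fun η : ℝ => m (2 * Real.pi * η)) h := by
  have hsqrt : (√(2 * Real.pi) : ℂ) ≠ 0 := by
    exact_mod_cast (Real.sqrt_pos.2 (by positivity)).ne'
  funext x
  rw [Mop, IFT_eq_fourierInv, SchwartzMap.fourierMultiplierCLM_apply, SchwartzMap.fourierInv_coe,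
    Real.fourierInv_eq', Real.fourierInv_eq', ← integral_const_mul]
  congr 1 with η
  rw [SchwartzMap.smulLeftCLM_apply_apply (hasTemperateGrowth_comp_two_pi_mul hm),
    SchwartzMap.fourier_coe, FT_two_pi_mul]
  simp only [smul_eq_mul]
  field_simp

lemma memLp_Mop {m : ℝ → ℂ} (hm : m.HasTemperateGrowth) (h : 𝓢(ℝ, ℂ)) : MemLp (Mop m h) 2 := by
  rw [Mop_eq_fourierMultiplierCLM hm]
  exact SchwartzMap.memLp (μ := volume) _ 2

lemma L2C_Mop_le {m : ℝ → ℂ} {M : ℝ} (hm : m.HasTemperateGrowth) (hM : ∀ ξ, ‖m ξ‖ ≤ M)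
    (h : 𝓢(ℝ, ℂ)) : L2C (Mop m h) ≤ M * L2C h := by
  rw [Mop_eq_fourierMultiplierCLM hm, ← L2C_fourier, ← L2C_fourier h,
    SchwartzMap.fourierMultiplierCLM_apply, FourierTransform.fourier_fourierInv_eq]
  refine L2C_le_mul_of_norm_le ((norm_nonneg _).trans (hM 0)) ((𝓕 h).memLp 2) fun η => ?_
  rw [SchwartzMap.smulLeftCLM_apply_apply (hasTemperateGrowth_comp_two_pi_mul hm), norm_smul]
  gcongr
  exact hM _

/-- Multiplication by the coordinate `x` on Schwartz functions, the position operator in the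
commutator `[x, Φ(D)]`. -/
noncomputable def mulCoord : 𝓢(ℝ, ℂ) →L[ℂ] 𝓢(ℝ, ℂ) :=
  SchwartzMap.smulLeftCLM ℂ (fun x : ℝ => (x : ℂ))

lemma mulCoord_apply (h : 𝓢(ℝ, ℂ)) (x : ℝ) : mulCoord h x = x * h x :=
  SchwartzMap.smulLeftCLM_apply_apply Function.Complex.hasTemperateGrowth_ofReal h x

lemma smulLeftCLM_inner_one (h : 𝓢(ℝ, ℂ)) :
    SchwartzMap.smulLeftCLM ℂ (fun x : ℝ => inner ℝ x (1 : ℝ)) h = mulCoord h := by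
  simpa [mulCoord] using (SchwartzMap.smulLeftCLM_ofReal ℂ
    (Function.hasTemperateGrowth_inner_left (1 : ℝ)) h).symm

lemma lineDerivOp_smulLeftCLM {Φ m : ℝ → ℂ} (hΦ : Φ.HasTemperateGrowth)
    (hm : m.HasTemperateGrowth) (hderiv : ∀ η, HasDerivAt Φ (m η) η) (g : 𝓢(ℝ, ℂ)) :
    ∂_{(1 : ℝ)} (SchwartzMap.smulLeftCLM ℂ Φ g) =
      SchwartzMap.smulLeftCLM ℂ m g + SchwartzMap.smulLeftCLM ℂ Φ (∂_{(1 : ℝ)} g) := by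
  ext η
  simp only [add_apply, SchwartzMap.smulLeftCLM_apply_apply hm,
    SchwartzMap.smulLeftCLM_apply_apply hΦ, SchwartzMap.lineDerivOp_apply_eq_fderiv,
    fderiv_apply_one_eq_deriv, SchwartzMap.smulLeftCLM_apply hΦ]
  exact ((hderiv η).mul (g.hasDerivAt η)).deriv

lemma fourierMultiplierCLM_deriv {Φ m : ℝ → ℂ} (hΦ : Φ.HasTemperateGrowth)
    (hm : m.HasTemperateGrowth) (hderiv : ∀ η, HasDerivAt Φ (m η) η) (h : 𝓢(ℝ, ℂ)) :
    SchwartzMap.fourierMultiplierCLM ℂ m h = -(2 * Real.pi * Complex.I : ℂ) •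
      (mulCoord (SchwartzMap.fourierMultiplierCLM ℂ Φ h) -
        SchwartzMap.fourierMultiplierCLM ℂ Φ (mulCoord h)) := by
  have hLeibniz := congrArg (𝓕⁻ ·) (lineDerivOp_smulLeftCLM hΦ hm hderiv (𝓕 h))
  simp only [SchwartzMap.fourierInv_lineDerivOp_eq, SchwartzMap.lineDerivOp_fourier_eq,
    smulLeftCLM_inner_one, FourierTransform.fourierInv_add] at hLeibniz
  simp only [SchwartzMap.fourierMultiplierCLM_apply, smul_sub]
  rw [hLeibniz, FourierTransform.fourier_smul, map_smul, FourierTransform.fourierInv_smul,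
    add_sub_cancel_right]

lemma Mop_deriv {Φ m : ℝ → ℂ} (hΦ : Φ.HasTemperateGrowth) (hm : m.HasTemperateGrowth)
    (hderiv : ∀ ξ, HasDerivAt Φ (m ξ) ξ) (h : 𝓢(ℝ, ℂ)) (x : ℝ) :
    Mop m h x = -Complex.I * (x * Mop Φ h x - Mop Φ (mulCoord h) x) := by
  have hpi : (2 * Real.pi : ℂ) ≠ 0 := by simp [Real.pi_ne_zero]
  have hΦ' := hasTemperateGrowth_comp_two_pi_mul hΦ
  have hm' := hasTemperateGrowth_comp_two_pi_mul hm
  have hderiv' (η : ℝ) : HasDerivAt (fun η => Φ (2 * Real.pi * η))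
      (((2 * Real.pi : ℂ) • fun η : ℝ => m (2 * Real.pi * η)) η) η := by
    have hlin : HasDerivAt (fun y : ℝ => 2 * Real.pi * y) (2 * Real.pi) η := by
      simpa using (hasDerivAt_id η).const_mul (2 * Real.pi)
    simpa [Complex.real_smul, Function.comp_def] using (hderiv (2 * Real.pi * η)).scomp η hlin
  have hm'_smul : ((2 * Real.pi : ℂ) • fun η : ℝ => m (2 * Real.pi * η)).HasTemperateGrowth :=
    (Function.HasTemperateGrowth.const (2 * Real.pi : ℂ)).smul hm'
  have hcomm := congrArg (fun g : 𝓢(ℝ, ℂ) => g x)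
    (fourierMultiplierCLM_deriv hΦ' hm'_smul hderiv' h)
  rw [SchwartzMap.fourierMultiplierCLM_smul hm'] at hcomm
  simp only [smul_apply, sub_apply, smul_eq_mul, mulCoord_apply] at hcomm
  rw [Mop_eq_fourierMultiplierCLM hm, Mop_eq_fourierMultiplierCLM hΦ,
    Mop_eq_fourierMultiplierCLM hΦ]
  refine mul_left_cancel₀ hpi ?_
  linear_combination hcomm

lemma L2C_mul_Mop_le {v m : ℝ → ℂ} {M : ℝ} (hv : ∀ x, ‖v x‖ ≤ 1) (hm : m.HasTemperateGrowth)
    (hM : ∀ ξ, ‖m ξ‖ ≤ M) (h : 𝓢(ℝ, ℂ)) : L2C (fun x => v x * Mop m h x) ≤ M * L2C h := by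
  have hvMop : L2C (fun x => v x * Mop m h x) ≤ 1 * L2C (Mop m h) :=
    L2C_le_mul_of_norm_le zero_le_one (memLp_Mop hm h) fun x => by
      rw [norm_mul]
      gcongr
      exact hv x
  rw [one_mul] at hvMop
  exact hvMop.trans (L2C_Mop_le hm hM h)

lemma L2C_mul_Mop_le_of_norm_primitive_le {v Φ m : ℝ → ℂ} {A : ℝ} (hv : ∀ x, ‖v x‖ ≤ (jap x)⁻¹)
    (hm : m.HasTemperateGrowth) (hderiv : ∀ ξ, HasDerivAt Φ (m ξ) ξ) (hA : ∀ ξ, ‖Φ ξ‖ ≤ A)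
    (h : 𝓢(ℝ, ℂ)) :
    L2C (fun x => v x * Mop m h x) ≤ A * (L2C h + L2C (mulCoord h)) := by
  have hΦ := hasTemperateGrowth_of_hasDerivAt_of_norm_le hm hderiv hA
  have hpointwise (x : ℝ) :
      ‖v x * Mop m h x‖ ≤ ‖Mop Φ h x‖ + ‖Mop Φ (mulCoord h) x‖ := by
    have hxv : ‖v x‖ * |x| ≤ 1 := by
      calc ‖v x‖ * |x| ≤ (jap x)⁻¹ * jap x := by
            gcongr
            exacts [(inv_pos.2 (jap_pos x)).le, hv x, abs_le_jap x]
        _ = 1 := inv_mul_cancel₀ (jap_pos x).ne'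
    have hv_one : ‖v x‖ ≤ 1 := (hv x).trans (inv_le_one_of_one_le₀ (one_le_jap x))
    calc ‖v x * Mop m h x‖ = ‖v x‖ * ‖x * Mop Φ h x - Mop Φ (mulCoord h) x‖ := by
          rw [Mop_deriv hΦ hm hderiv]
          simp
      _ ≤ ‖v x‖ * (|x| * ‖Mop Φ h x‖ + ‖Mop Φ (mulCoord h) x‖) := by
          gcongr
          exact (norm_sub_le _ _).trans_eq (by simp)
      _ = ‖v x‖ * |x| * ‖Mop Φ h x‖ + ‖v x‖ * ‖Mop Φ (mulCoord h) x‖ := by ring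
      _ ≤ 1 * ‖Mop Φ h x‖ + 1 * ‖Mop Φ (mulCoord h) x‖ := by gcongr
      _ = ‖Mop Φ h x‖ + ‖Mop Φ (mulCoord h) x‖ := by simp
  calc L2C (fun x => v x * Mop m h x) ≤ L2C (Mop Φ h) + L2C (Mop Φ (mulCoord h)) :=
        L2C_le_add_of_norm_le (memLp_Mop hΦ h) (memLp_Mop hΦ _) hpointwise
    _ ≤ A * L2C h + A * L2C (mulCoord h) :=
        add_le_add (L2C_Mop_le hΦ hA h) (L2C_Mop_le hΦ hA _)
    _ = A * (L2C h + L2C (mulCoord h)) := by ring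

/-! ### Van der Corput's first-derivative test -/

lemma norm_integral_smul_deriv_le_of_deriv_nonpos {E : Type*} [NormedAddCommGroup E]
    [NormedSpace ℝ E] [CompleteSpace E] {w w' : ℝ → ℝ} {e e' : ℝ → E} {c d M : ℝ} (hcd : c ≤ d)
    (hw : ∀ s ∈ Set.uIcc c d, HasDerivAt w (w' s) s) (hw' : ∀ s ∈ Set.Icc c d, w' s ≤ 0)
    (hwd : 0 ≤ w d) (he : ∀ s ∈ Set.uIcc c d, HasDerivAt e (e' s) s)
    (he' : IntervalIntegrable e' volume c d) (hM : ∀ s ∈ Set.Icc c d, ‖e s‖ ≤ M) :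
    ‖∫ s in c..d, w s • e' s‖ ≤ 2 * M * w c := by
  have hw'_int : IntervalIntegrable w' volume c d := by
    have hneg := intervalIntegral.intervalIntegrable_deriv_of_nonneg (g := -w) (g' := -w')
      (fun s hs => (hw s hs).continuousAt.continuousWithinAt.neg)
      (fun s hs => (hw s (Set.Ioo_subset_Icc_self hs)).neg)
      (by simpa [hcd] using fun s hs hs' => hw' s ⟨hs.le, hs'.le⟩)
    simpa using hneg.neg
  have hdecrease : ∫ s in c..d, -w' s = w c - w d := by
    rw [intervalIntegral.integral_neg,
      intervalIntegral.integral_eq_sub_of_hasDerivAt hw hw'_int, neg_sub]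
  have hwdc : w d ≤ w c := sub_nonneg.1 <| hdecrease ▸
    intervalIntegral.integral_nonneg hcd fun s hs => neg_nonneg.2 (hw' s hs)
  have hw'e : ‖∫ s in c..d, w' s • e s‖ ≤ M * (w c - w d) := by
    rw [← hdecrease, ← intervalIntegral.integral_const_mul]
    refine intervalIntegral.norm_integral_le_of_norm_le hcd (.of_forall fun s hs => ?_)
      (hw'_int.neg.const_mul M)
    have hs := Set.Ioc_subset_Icc_self hs
    rw [norm_smul, Real.norm_of_nonpos (hw' s hs), mul_comm]
    exact mul_le_mul_of_nonneg_right (hM s hs) (neg_nonneg.2 (hw' s hs))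
  rw [intervalIntegral.integral_smul_deriv_eq_deriv_smul hw he hw'_int he']
  calc ‖w d • e d - w c • e c - ∫ s in c..d, w' s • e s‖
      ≤ ‖w d • e d‖ + ‖w c • e c‖ + ‖∫ s in c..d, w' s • e s‖ :=
        (norm_sub_le _ _).trans (add_le_add_left (norm_sub_le _ _) _)
    _ ≤ w d * M + w c * M + M * (w c - w d) := by
        rw [norm_smul, norm_smul, Real.norm_of_nonneg hwd, Real.norm_of_nonneg (hwd.trans hwdc)]
        gcongr
        exacts [hM d ⟨hcd, le_rfl⟩, hwd.trans hwdc, hM c ⟨le_rfl, hcd⟩]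
    _ = 2 * M * w c := by ring

lemma norm_integral_smul_deriv_mul_cexp_le {w w' φ φ' : ℝ → ℝ} {c d : ℝ} (hcd : c ≤ d)
    (hw : ∀ s ∈ Set.uIcc c d, HasDerivAt w (w' s) s) (hw' : ∀ s ∈ Set.Icc c d, w' s ≤ 0)
    (hwd : 0 ≤ w d) (hφ : ∀ s ∈ Set.uIcc c d, HasDerivAt φ (φ' s) s)
    (hφ' : IntervalIntegrable φ' volume c d) :
    ‖∫ s in c..d, w s • (φ' s * Complex.exp (Complex.I * φ s))‖ ≤ 2 * w c := by
  have hexp (s : ℝ) (hs : s ∈ Set.uIcc c d) : HasDerivAt (fun s => Complex.exp (Complex.I * φ s))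
      (Complex.exp (Complex.I * φ s) * (Complex.I * φ' s)) s :=
    ((hφ s hs).ofReal_comp.const_mul Complex.I).cexp
  have hprimitive (s : ℝ) (hs : s ∈ Set.uIcc c d) :
      HasDerivAt (fun s => -Complex.I * Complex.exp (Complex.I * φ s))
        (φ' s * Complex.exp (Complex.I * φ s)) s := by
    convert! (hexp s hs).const_mul (-Complex.I) using 1
    linear_combination (φ' s * Complex.exp (Complex.I * φ s)) * Complex.I_sq
  simpa using norm_integral_smul_deriv_le_of_deriv_nonpos hcd hw hw' hwd hprimitive
    (.mul_continuousOn ⟨hφ'.1.ofReal, hφ'.2.ofReal⟩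
      fun s hs => (hexp s hs).continuousAt.continuousWithinAt)
    (M := 1) fun s _ => by simp [Complex.norm_exp]

/-! ### The Klein–Gordon symbol -/

/-- The symbol `⟨ξ⟩^{-b} e^{iτ⟨ξ⟩}` of `⟨∇⟩^{-b} e^{iτ⟨∇⟩}`, with the sign of the propagator
absorbed into the time `τ`. -/
noncomputable def kleinGordonSymbol (b τ ξ : ℝ) : ℂ :=
  ((jap ξ ^ (-b) : ℝ) : ℂ) * Complex.exp (Complex.I * (τ * jap ξ : ℝ))

lemma kleinGordonSymbol_mul (b σ t : ℝ) :
    kleinGordonSymbol b (σ * t) = fun ξ => ((jap ξ ^ (-b) : ℝ) : ℂ) *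
      Complex.exp (Complex.I * (σ : ℂ) * (t : ℂ) * (jap ξ : ℂ)) := by
  funext ξ
  simp [kleinGordonSymbol, mul_assoc]

lemma hasTemperateGrowth_kleinGordonSymbol (b τ : ℝ) :
    (kleinGordonSymbol b τ).HasTemperateGrowth :=
  (hasTemperateGrowth_ofReal_jap_rpow (-b)).mul
    (hasTemperateGrowth_cexp_I_mul.comp (by fun_prop : (fun ξ => τ * jap ξ).HasTemperateGrowth))

lemma continuous_kleinGordonSymbol (b τ : ℝ) : Continuous (kleinGordonSymbol b τ) :=
  (hasTemperateGrowth_kleinGordonSymbol b τ).1.continuous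

lemma kleinGordonSymbol_neg (b τ ξ : ℝ) : kleinGordonSymbol b τ (-ξ) = kleinGordonSymbol b τ ξ := by
  simp [kleinGordonSymbol, jap_neg]

lemma norm_kleinGordonSymbol_le_one {b : ℝ} (hb : 0 ≤ b) (τ ξ : ℝ) :
    ‖kleinGordonSymbol b τ ξ‖ ≤ 1 := by
  rw [kleinGordonSymbol, norm_mul, norm_ofReal_jap_rpow, Complex.norm_exp_I_mul_ofReal, mul_one]
  exact Real.rpow_le_one_of_one_le_of_nonpos (one_le_jap ξ) (neg_nonpos.2 hb)

lemma hasDerivAt_jap_rpow_div (b : ℝ) {s : ℝ} (hs : s ≠ 0) :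
    HasDerivAt (fun s => jap s ^ (1 - b) / s)
      (-(jap s ^ (-1 - b) * (1 + b * s ^ 2)) / s ^ 2) s := by
  have hjap := jap_pos s
  have hjap_sq : jap s ^ 2 = 1 + s ^ 2 := Real.sq_sqrt (by positivity)
  convert! ((hasDerivAt_jap s).rpow_const (p := 1 - b) (Or.inl hjap.ne')).div (hasDerivAt_id s) hs
    using 1
  have hexp₁ : jap s ^ (1 - b) = jap s ^ (-1 - b) * jap s ^ 2 := by
    rw [← Real.rpow_add_natCast hjap.ne']; congr 1; push_cast; ring
  have hexp₀ : jap s ^ (1 - b - 1) = jap s ^ (-1 - b) * jap s := by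
    rw [← Real.rpow_add_one hjap.ne']; congr 1; ring
  rw [hexp₁, hexp₀, hjap_sq]
  simp only [id]
  field_simp
  ring

lemma abs_mul_norm_integral_kleinGordonSymbol_le {b c d : ℝ} (hb : 0 ≤ b) (τ : ℝ) (hc : 0 < c)
    (hcd : c ≤ d) :
    |τ| * ‖∫ s in c..d, kleinGordonSymbol b τ s‖ ≤ 2 * (jap c ^ (1 - b) / c) := by
  have hpos {s : ℝ} (hs : s ∈ Set.uIcc c d) : 0 < s :=
    hc.trans_le (Set.uIcc_of_le hcd ▸ hs).1
  have hintegrand : ∀ s ∈ Set.uIcc c d, (τ : ℂ) * kleinGordonSymbol b τ s =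
      (jap s ^ (1 - b) / s) •
        ((τ * (s / jap s) : ℝ) * Complex.exp (Complex.I * (τ * jap s : ℝ))) := by
    intro s hs
    have hreal : τ * jap s ^ (-b) = jap s ^ (1 - b) / s * (τ * (s / jap s)) := by
      have hs := (hpos hs).ne'
      have hjap := (jap_pos s).ne'
      rw [sub_eq_neg_add, Real.rpow_add_one hjap]
      field_simp
    rw [kleinGordonSymbol, Complex.real_smul, ← mul_assoc, ← mul_assoc, ← Complex.ofReal_mul,
      ← Complex.ofReal_mul, hreal]
  have hphase' : Continuous fun s => τ * (s / jap s) := by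
    have hjap : Continuous jap := hasTemperateGrowth_jap.1.continuous
    exact continuous_const.mul (continuous_id.div hjap fun s => (jap_pos s).ne')
  rw [← Real.norm_eq_abs, ← Complex.norm_real, ← norm_mul, ← intervalIntegral.integral_const_mul,
    intervalIntegral.integral_congr hintegrand]
  refine norm_integral_smul_deriv_mul_cexp_le hcd
    (fun s hs => hasDerivAt_jap_rpow_div b (hpos hs).ne') (fun s _ => ?_) ?_
    (fun s _ => (hasDerivAt_jap s).const_mul τ) (hphase'.intervalIntegrable c d)
  · have := jap_pos s
    rw [neg_div, neg_nonpos]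
    positivity
  · have := jap_pos d
    have := hc.trans_le hcd
    positivity

lemma norm_integral_kleinGordonSymbol_le_of_nonneg {b τ x : ℝ} (hb : 0 ≤ b) (hτ : 1 ≤ |τ|)
    (hx : 0 ≤ x) : ‖∫ s in (0 : ℝ)..x, kleinGordonSymbol b τ s‖ ≤ 5 / √|τ| := by
  have hnear {y : ℝ} (hy : 0 ≤ y) : ‖∫ s in (0 : ℝ)..y, kleinGordonSymbol b τ s‖ ≤ y := by
    simpa [abs_of_nonneg hy] using intervalIntegral.norm_integral_le_of_norm_le_const
      fun s (_ : s ∈ Set.uIoc 0 y) => norm_kleinGordonSymbol_le_one hb τ s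
  -- the stationary point `0` of the phase forces the cut at distance `|τ|^{-1/2}`
  set c := 1 / √|τ| with hc
  have hsqrt : 1 ≤ √|τ| := Real.one_le_sqrt.2 hτ
  have hc_pos : 0 < c := by positivity
  have hc_le : c ≤ 1 := (div_le_one (by positivity)).2 hsqrt
  rcases le_total x c with hxc | hcx
  · exact (hnear hx).trans (hxc.trans (by rw [hc]; gcongr; norm_num))
  have hfar : ‖∫ s in c..x, kleinGordonSymbol b τ s‖ ≤ 4 / √|τ| := by
    have hjap : jap c ^ (1 - b) ≤ 2 := by
      calc jap c ^ (1 - b) ≤ jap c ^ (1 : ℝ) :=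
            Real.rpow_le_rpow_of_exponent_le (one_le_jap c) (by linarith)
        _ = jap c := Real.rpow_one _
        _ ≤ 2 := by linarith [jap_le_one_add_abs c, abs_of_pos hc_pos]
    have hvdc := abs_mul_norm_integral_kleinGordonSymbol_le hb τ hc_pos hcx
    refine le_of_mul_le_mul_left (hvdc.trans ?_) (by positivity : 0 < |τ|)
    calc 2 * (jap c ^ (1 - b) / c) ≤ 2 * (2 / c) := by gcongr
      _ = 4 * √|τ| := by rw [hc]; field_simp; norm_num
      _ = |τ| * (4 / √|τ|) := by
          nth_rw 2 [← Real.mul_self_sqrt (abs_nonneg τ)]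
          field_simp
  rw [← intervalIntegral.integral_add_adjacent_intervals
    ((continuous_kleinGordonSymbol b τ).intervalIntegrable 0 c)
    ((continuous_kleinGordonSymbol b τ).intervalIntegrable c x)]
  calc _ ≤ c + 4 / √|τ| := (norm_add_le _ _).trans (add_le_add (hnear hc_pos.le) hfar)
    _ = 5 / √|τ| := by rw [hc]; ring

lemma norm_integral_kleinGordonSymbol_le {b τ : ℝ} (hb : 0 ≤ b) (hτ : 1 ≤ |τ|) (x : ℝ) :
    ‖∫ s in (0 : ℝ)..x, kleinGordonSymbol b τ s‖ ≤ 5 / √|τ| := by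
  rcases le_total 0 x with hx | hx
  · exact norm_integral_kleinGordonSymbol_le_of_nonneg hb hτ hx
  · have hodd := intervalIntegral.integral_comp_neg (a := 0) (b := x) (kleinGordonSymbol b τ)
    simp only [kleinGordonSymbol_neg, neg_zero] at hodd
    rw [hodd, intervalIntegral.integral_symm, norm_neg]
    exact norm_integral_kleinGordonSymbol_le_of_nonneg hb hτ (neg_nonneg.2 hx)

/-! ### Local decay -/

lemma L2C_jap_rpow_neg_mul_Mop_kleinGordonSymbol_le {a b τ : ℝ} (ha : 1 ≤ a) (hb : 0 ≤ b)
    (h : 𝓢(ℝ, ℂ)) :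
    L2C (fun x => ((jap x ^ (-a) : ℝ) : ℂ) * Mop (kleinGordonSymbol b τ) h x) ≤
      10 * jap τ ^ (-(1 : ℝ) / 2) * (L2C h + L2C (mulCoord h)) := by
  have hm := hasTemperateGrowth_kleinGordonSymbol b τ
  have hv (x : ℝ) : ‖((jap x ^ (-a) : ℝ) : ℂ)‖ ≤ (jap x)⁻¹ :=
    (norm_ofReal_jap_rpow x (-a)).trans_le (jap_rpow_neg_le_inv ha x)
  have hnonneg : 0 ≤ L2C h + L2C (mulCoord h) := add_nonneg (L2C_nonneg _) (L2C_nonneg _)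
  rcases le_total 1 |τ| with hτ | hτ
  · have hderiv (ξ : ℝ) : HasDerivAt (fun x => ∫ s in (0 : ℝ)..x, kleinGordonSymbol b τ s)
        (kleinGordonSymbol b τ ξ) ξ :=
      (continuous_kleinGordonSymbol b τ).integral_hasStrictDerivAt 0 ξ |>.hasDerivAt
    refine (L2C_mul_Mop_le_of_norm_primitive_le hv hm hderiv
      (norm_integral_kleinGordonSymbol_le hb hτ) h).trans ?_
    gcongr
    rw [div_eq_mul_inv]
    linarith [inv_sqrt_le_two_mul_jap_rpow hτ le_rfl]
  · have hdecay : 1 ≤ 2 * jap τ ^ (-(1 : ℝ) / 2) := by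
      simpa using inv_sqrt_le_two_mul_jap_rpow le_rfl hτ
    refine (L2C_mul_Mop_le (fun x => (hv x).trans (inv_le_one_of_one_le₀ (one_le_jap x))) hm
      (norm_kleinGordonSymbol_le_one hb τ) h).trans ?_
    exact mul_le_mul (by linarith) (le_add_of_nonneg_right (L2C_nonneg _)) (L2C_nonneg _)
      (by linarith)

theorem local_decay_klein_gordon_general {a a' b : ℝ} (ha : 1 ≤ a) (ha' : 1 ≤ a') (hb : 0 ≤ b)
    (τ : ℝ) (f : 𝓢(ℝ, ℂ)) :
    L2C (fun x => ((jap x ^ (-a') : ℝ) : ℂ) *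
        Mop (kleinGordonSymbol b τ) (fun z => ((jap z ^ (-a) : ℝ) : ℂ) * f z) x) ≤
      20 * jap τ ^ (-(1 : ℝ) / 2) * L2C f := by
  set h : 𝓢(ℝ, ℂ) := SchwartzMap.smulLeftCLM ℂ (fun z => ((jap z ^ (-a) : ℝ) : ℂ)) f
  have hh (x : ℝ) : h x = ((jap x ^ (-a) : ℝ) : ℂ) * f x :=
    SchwartzMap.smulLeftCLM_apply_apply (hasTemperateGrowth_ofReal_jap_rpow (-a)) f x
  have hjap_mul_h (x : ℝ) : jap x * ‖h x‖ ≤ ‖f x‖ := by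
    rw [hh, norm_mul, norm_ofReal_jap_rpow, ← mul_assoc]
    exact mul_le_of_le_one_left (norm_nonneg _) (jap_mul_jap_rpow_neg_le_one ha x)
  have hL2 (g : 𝓢(ℝ, ℂ)) (hg : ∀ x, ‖g x‖ ≤ jap x * ‖h x‖) : L2C g ≤ L2C f := by
    simpa using L2C_le_mul_of_norm_le zero_le_one (f.memLp 2) fun x => by
      simpa using (hg x).trans (hjap_mul_h x)
  have hbound : L2C h + L2C (mulCoord h) ≤ 2 * L2C f := by
    have hh_le := hL2 h fun x => le_mul_of_one_le_left (norm_nonneg _) (one_le_jap x)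
    have hxh_le := hL2 (mulCoord h) fun x => by
      rw [mulCoord_apply, norm_mul, Complex.norm_real]
      gcongr
      exact abs_le_jap x
    linarith
  have hjap : 0 ≤ jap τ ^ (-(1 : ℝ) / 2) := Real.rpow_nonneg (jap_pos τ).le _
  rw [← funext hh]
  calc _ ≤ 10 * jap τ ^ (-(1 : ℝ) / 2) * (L2C h + L2C (mulCoord h)) :=
        L2C_jap_rpow_neg_mul_Mop_kleinGordonSymbol_le ha' hb h
    _ ≤ 10 * jap τ ^ (-(1 : ℝ) / 2) * (2 * L2C f) := by gcongr
    _ = 20 * jap τ ^ (-(1 : ℝ) / 2) * L2C f := by ring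

/-- Pointwise-in-time local decay for the Klein–Gordon propagator:
`‖⟨·⟩^{-a} ⟨∇⟩^{-b} e^{±it⟨∇⟩} (⟨·⟩^{-a} f)‖_{L²} ≤ C ⟨t⟩^{-1/2} ‖f‖_{L²}`
for all `a ≥ 1`, `b ≥ 0`. -/
theorem local_decay_klein_gordon (a b : ℝ) (ha : 1 ≤ a) (hb : 0 ≤ b) :
    ∃ C : ℝ, 1 ≤ C ∧
      ∀ σ : ℝ, (σ = 1 ∨ σ = -1) → ∀ (t : ℝ) (f : SchwartzMap ℝ ℂ),
        L2C (fun x => ((jap x ^ (-a) : ℝ) : ℂ) *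
            Mop (fun ξ => ((jap ξ ^ (-b) : ℝ) : ℂ) *
                Complex.exp (Complex.I * (σ : ℂ) * (t : ℂ) * (jap ξ : ℂ)))
              (fun z => ((jap z ^ (-a) : ℝ) : ℂ) * f z) x)
          ≤ C * jap t ^ (-(1 : ℝ) / 2) * L2C (fun x => f x) := by
  refine ⟨20, by norm_num, fun σ hσ t f => ?_⟩
  simpa only [kleinGordonSymbol_mul, jap_mul_of_eq_one_or_neg_one hσ] using
    local_decay_klein_gordon_general ha ha hb (σ * t) f
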